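/- Let G be a finite simple graph and let σ be a preordering of G of even length m. Then σ-gcol(G) ≤ σ-gcol_B(G); that is, Alice cannot obtain a smaller score in the σ-game by letting Bob move first (equivalently, by skipping her first turn). -/

import Mathlib

open scoped Classical

/-- The number of backneighbors of `v` with respect to the ordering `τ`:
neighbors of `v` in `G` that appear (strictly) before `v` in `τ`. -/
noncomputable def backDeg {V : Type*} [Fintype V] (G : SimpleGraph V)
    (τ : List V) (v : V) : ℕ :=
  (Finset.univ.filter (fun u =>
    G.Adj v u ∧ ∃ i j : Fin τ.length, i < j ∧ τ.get i = u ∧ τ.get j = v)).card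

/-- `col(G, τ)`: the maximum over all vertices `v` of
`1 +` (the number of backneighbors of `v` with respect to `τ`). -/
noncomputable def colOrd {V : Type*} [Fintype V] (G : SimpleGraph V)
    (τ : List V) : ℕ :=
  Finset.univ.sup (fun v => 1 + backDeg G τ v)

/-- The minimax value of the ordering game on `G` continued from the position
(partial ordering) `σ`, where `alice = true` means it is Alice's turn to choose
an unchosen vertex (Alice minimizes the final score `colOrd G τ`, Bob
maximizes it).  This value is the least `s` such that the player-to-move's
opponent-robust guarantee holds, i.e. the least `s` such that Alice has a
strategy from this position guaranteeing a score of at most `s`. -/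
noncomputable def gameVal {V : Type*} [Fintype V] (G : SimpleGraph V)
    (alice : Bool) (σ : List V) : ℕ :=
  if h : (Finset.univ.filter (fun v : V => v ∉ σ)).Nonempty then
    if alice then
      (Finset.univ.filter (fun v : V => v ∉ σ)).attach.inf'
        (Finset.attach_nonempty_iff.mpr h)
        (fun v => gameVal G false (σ ++ [v.1]))
    else
      (Finset.univ.filter (fun v : V => v ∉ σ)).attach.sup'
        (Finset.attach_nonempty_iff.mpr h)
        (fun v => gameVal G true (σ ++ [v.1]))
  else colOrd G σ
termination_by (Finset.univ.filter (fun v : V => v ∉ σ)).card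
decreasing_by
  all_goals {
    have hv : ↑v ∉ σ := (Finset.mem_filter.mp v.2).2
    apply Finset.card_lt_card
    constructor
    · intro u hu
      simp only [Finset.mem_filter, List.mem_append] at hu ⊢
      exact ⟨hu.1, fun h' => hu.2 (Or.inl h')⟩
    · intro hsub
      have := hsub (Finset.mem_filter.mpr ⟨Finset.mem_univ _, hv⟩)
      simp at this }

/-- The game coloring number of `G`: the value of the ordering game on `G`
with Alice moving first (also written `gcol_A`). -/
noncomputable def gcol {V : Type*} [Fintype V] (G : SimpleGraph V) : ℕ :=
  gameVal G true []

/-- The value of the Bob ordering game on `G` (Bob moves first). -/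
noncomputable def gcolB {V : Type*} [Fintype V] (G : SimpleGraph V) : ℕ :=
  gameVal G false []

/-- The `σ`-game coloring number of `G`: the value of the `σ`-preordered
ordering game, in which Alice moves first if `|σ|` is even and Bob moves
first if `|σ|` is odd. -/
noncomputable def sigmaGcol {V : Type*} [Fintype V] (G : SimpleGraph V)
    (σ : List V) : ℕ :=
  if Even σ.length then gameVal G true σ else gameVal G false σ

/-- The Alice `σ`-game coloring number: the value of the `σ`-preordered game
in which Alice moves first. -/
noncomputable def sigmaGcolA {V : Type*} [Fintype V] (G : SimpleGraph V)
    (σ : List V) : ℕ :=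
  gameVal G true σ

/-- The Bob `σ`-game coloring number: the value of the `σ`-preordered game
in which Bob moves first. -/
noncomputable def sigmaGcolB {V : Type*} [Fintype V] (G : SimpleGraph V)
    (σ : List V) : ℕ :=
  gameVal G false σ

/-!
Fix a target score `s`. The number of backneighbors of a vertex is settled when the vertex is
chosen and depends only on the set `C` of vertices chosen before it, so whether Alice can keep the
score at most `s` is a question about `C` and the player to move.

If Alice wins from `C ≠ V`, then the last vertex of a winning play has degree less than `s`; call
it `b`. Such a vertex is safe at any time, so having it already chosen is no advantage to Alice: if
she wins from `C ∪ {b}`, then she wins from `C` with the same player to move, by playing as if `b`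
were chosen and choosing it only when Bob does or when nothing else is left. When Bob takes `b` in
this imagined game, Alice has to move from a position she wins with Bob to move, which is the
theorem itself at a larger set; so the two claims are proved in one induction.

Now suppose Alice wins from `C` with Bob to move. If Bob chooses `b`, she wins from `C ∪ {b}` with
herself to move, hence from `C` with herself to move.
-/

section Precedence

variable {V : Type*}

theorem pair_sublist_iff_exists_get {τ : List V} {u v : V} :
    [u, v].Sublist τ ↔ ∃ i j : Fin τ.length, i < j ∧ τ.get i = u ∧ τ.get j = v := by
  have not_iff : (∀ {a b}, [a, b].Sublist τ → ¬(a = u ∧ b = v)) ↔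
      ∀ i j, i < j → ¬(τ.get i = u ∧ τ.get j = v) :=
    List.pairwise_iff_forall_sublist.symm.trans List.pairwise_iff_get
  grind

theorem pair_sublist_concat_iff {σ : List V} {u v w : V} :
    [u, w].Sublist (σ ++ [v]) ↔ [u, w].Sublist σ ∨ u ∈ σ ∧ w = v := by
  rw [← List.reverse_sublist, ← List.reverse_sublist (l₂ := σ)]
  simp only [List.reverse_append, List.reverse_cons, List.reverse_nil, List.nil_append,
    List.singleton_append, List.sublist_cons_iff]
  simp [and_comm]

variable [Fintype V] (G : SimpleGraph V)

theorem backDeg_eq_card_pair_sublist (τ : List V) (v : V) :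
    backDeg G τ v = (Finset.univ.filter fun u ↦ G.Adj v u ∧ [u, v].Sublist τ).card := by
  simp only [backDeg, pair_sublist_iff_exists_get]

theorem backDeg_concat_of_ne (σ : List V) {v w : V} (hwv : w ≠ v) :
    backDeg G (σ ++ [v]) w = backDeg G σ w := by
  simp only [backDeg_eq_card_pair_sublist, pair_sublist_concat_iff, hwv, and_false, or_false]

theorem backDeg_concat_self {σ : List V} {v : V} (hv : v ∉ σ) :
    backDeg G (σ ++ [v]) v = (σ.toFinset.filter (G.Adj v)).card := by
  have not_sublist (u : V) : ¬[u, v].Sublist σ := fun h ↦ hv (h.subset (by simp))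
  rw [backDeg_eq_card_pair_sublist]
  congr 1
  ext u
  simp [pair_sublist_concat_iff, not_sublist, and_comm]

theorem colOrd_le_iff {τ : List V} {s : ℕ} : colOrd G τ ≤ s ↔ ∀ v, backDeg G τ v < s := by
  simp [colOrd, Nat.one_add_le_iff]

end Precedence

section GameValue

variable {V : Type*} [Fintype V] {G : SimpleGraph V} {s : ℕ} {σ : List V}

theorem gameVal_of_forall_mem (hσ : ∀ v, v ∈ σ) (alice : Bool) :
    gameVal G alice σ = colOrd G σ := by
  rw [gameVal, dif_neg (by simp [hσ])]

theorem gameVal_true_le_iff (hσ : ∃ v, v ∉ σ) :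
    gameVal G true σ ≤ s ↔ ∃ v ∉ σ, gameVal G false (σ ++ [v]) ≤ s := by
  have hfree : (Finset.univ.filter (· ∉ σ)).Nonempty := by simpa [Finset.Nonempty] using hσ
  rw [gameVal, dif_pos hfree]
  simp [Finset.inf'_le_iff]

theorem gameVal_false_le_iff (hσ : ∃ v, v ∉ σ) :
    gameVal G false σ ≤ s ↔ ∀ v ∉ σ, gameVal G true (σ ++ [v]) ≤ s := by
  have hfree : (Finset.univ.filter (· ∉ σ)).Nonempty := by simpa [Finset.Nonempty] using hσ
  rw [gameVal, dif_pos hfree]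
  simp [Finset.sup'_le_iff]

end GameValue

/-- Choosing `v` right after exactly the vertices of `C` keeps the contribution
`1 + |N(v) ∩ C|` of `v` to the score at most `s`. In particular `IsSafe G s Finset.univ v` says
that `v` has degree less than `s`, so that choosing it is safe at any time. -/
def IsSafe {V : Type*} (G : SimpleGraph V) (s : ℕ) (C : Finset V) (v : V) : Prop :=
  (C.filter (G.Adj v)).card < s

/-- Alice can make every future choice safe, for the target score `s`, when `C` is the set of
vertices chosen so far and it is her turn if the Boolean is `true`, Bob's if it is `false`. The
finished game with Bob to move is covered by `bob`, whose premises are then vacuous. -/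
inductive AliceWins {V : Type*} [Fintype V] (G : SimpleGraph V) (s : ℕ) : Bool → Finset V → Prop
  | finished : AliceWins G s true Finset.univ
  | alice {C : Finset V} {v : V} (hv : v ∉ C) (hsafe : IsSafe G s C v)
      (hwin : AliceWins G s false (insert v C)) : AliceWins G s true C
  | bob {C : Finset V} (hsafe : ∀ v ∉ C, IsSafe G s C v)
      (hwin : ∀ v ∉ C, AliceWins G s true (insert v C)) : AliceWins G s false C

namespace IsSafe

variable {V : Type*} {G : SimpleGraph V} {s : ℕ} {C D : Finset V} {v : V}

theorem anti (h : IsSafe G s D v) (hCD : C ⊆ D) : IsSafe G s C v :=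
  (Finset.card_le_card (Finset.filter_subset_filter _ hCD)).trans_lt h

theorem insert_self (h : IsSafe G s C v) : IsSafe G s (insert v C) v := by
  rwa [IsSafe, Finset.filter_insert, if_neg G.irrefl]

end IsSafe

namespace AliceWins

variable {V : Type*} [Fintype V] {G : SimpleGraph V} {s : ℕ} {C : Finset V} {b : V}

theorem univ (alice : Bool) : AliceWins G s alice Finset.univ := by
  cases alice
  · exact bob (by simp) (by simp)
  · exact finished

theorem true_iff_exists (hC : C ≠ Finset.univ) :
    AliceWins G s true C ↔ ∃ v ∉ C, IsSafe G s C v ∧ AliceWins G s false (insert v C) := by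
  constructor
  · rintro (_ | ⟨hv, hsafe, hwin⟩)
    · exact absurd rfl hC
    · exact ⟨_, hv, hsafe, hwin⟩
  · rintro ⟨v, hv, hsafe, hwin⟩
    exact alice hv hsafe hwin

theorem false_iff_forall :
    AliceWins G s false C ↔ ∀ v ∉ C, IsSafe G s C v ∧ AliceWins G s true (insert v C) :=
  ⟨fun | bob hsafe hwin => fun v hv ↦ ⟨hsafe v hv, hwin v hv⟩,
    fun h ↦ bob (fun v hv ↦ (h v hv).1) fun v hv ↦ (h v hv).2⟩

theorem exists_isSafe_univ {alice : Bool} (h : AliceWins G s alice C) (hC : C ≠ Finset.univ) :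
    ∃ b ∉ C, IsSafe G s Finset.univ b := by
  have of_insert {C : Finset V} {v : V} (hv : v ∉ C) (hsafe : IsSafe G s C v)
      (ih : insert v C ≠ Finset.univ → ∃ b ∉ insert v C, IsSafe G s Finset.univ b) :
      ∃ b ∉ C, IsSafe G s Finset.univ b := by
    by_cases hlast : insert v C = Finset.univ
    · exact ⟨v, hv, hlast ▸ hsafe.insert_self⟩
    · obtain ⟨b, hb, hbsafe⟩ := ih hlast
      exact ⟨b, fun hbC ↦ hb (Finset.mem_insert_of_mem hbC), hbsafe⟩
  induction h with
  | finished => exact absurd rfl hC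
  | alice hv hsafe _ ih => exact of_insert hv hsafe ih
  | @bob C hsafe _ ih =>
    obtain ⟨v, hv⟩ : ∃ v, v ∉ C := by simpa [Finset.eq_univ_iff_forall] using hC
    exact of_insert hv (hsafe v hv) (ih v hv)

theorem true_of_true_insert (hb : b ∉ C) (hbsafe : IsSafe G s Finset.univ b)
    (of_insert : ∀ x ∉ C, AliceWins G s false (insert b (insert x C)) →
      AliceWins G s false (insert x C))
    (h : AliceWins G s true (insert b C)) : AliceWins G s true C := by
  by_cases hlast : insert b C = Finset.univ
  · exact alice hb (hbsafe.anti (Finset.subset_univ C)) (hlast ▸ univ false)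
  · obtain ⟨x, hx, hxsafe, hxwin⟩ := (true_iff_exists hlast).1 h
    have hxC : x ∉ C := fun hxC ↦ hx (Finset.mem_insert_of_mem hxC)
    exact alice hxC (hxsafe.anti (Finset.subset_insert b C))
      (of_insert x hxC (Finset.insert_comm b x C ▸ hxwin))

theorem true_of_false_of_insert
    (of_insert : ∀ b ∉ C, IsSafe G s Finset.univ b → AliceWins G s true (insert b C) →
      AliceWins G s true C)
    (h : AliceWins G s false C) : AliceWins G s true C := by
  by_cases hC : C = Finset.univ
  · exact hC ▸ univ true
  · obtain ⟨b, hb, hbsafe⟩ := h.exists_isSafe_univ hC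
    exact of_insert b hb hbsafe (false_iff_forall.1 h b hb).2

theorem of_insert (hbsafe : IsSafe G s Finset.univ b) {alice : Bool}
    (h : AliceWins G s alice (insert b C)) : AliceWins G s alice C := by
  induction C using WellFoundedGT.induction generalizing b alice with
  | _ C ih =>
  by_cases hb : b ∈ C
  · rwa [Finset.insert_eq_of_mem hb] at h
  cases alice with
  | true =>
    exact true_of_true_insert hb hbsafe (fun x hx ↦ ih _ (Finset.ssubset_insert hx) hbsafe) h
  | false =>
    refine false_iff_forall.2 fun v hv ↦ ?_
    by_cases hvb : v = b
    · subst hvb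
      exact ⟨hbsafe.anti (Finset.subset_univ C), true_of_false_of_insert
        (fun _ _ hsafe hwin ↦ ih _ (Finset.ssubset_insert hv) hsafe hwin) h⟩
    · obtain ⟨hvsafe, hvwin⟩ := false_iff_forall.1 h v (by simp [hvb, hv])
      exact ⟨hvsafe.anti (Finset.subset_insert b C),
        ih _ (Finset.ssubset_insert hv) hbsafe (Finset.insert_comm v b C ▸ hvwin)⟩

theorem true_of_false (h : AliceWins G s false C) : AliceWins G s true C :=
  true_of_false_of_insert (fun _ _ hbsafe ↦ of_insert hbsafe) h

end AliceWins

section Threshold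

variable {V : Type*} [Fintype V] {G : SimpleGraph V} {s : ℕ} {σ : List V}

theorem forall_backDeg_concat_lt_iff {v : V} (hv : v ∉ σ) :
    (∀ w ∈ σ ++ [v], backDeg G (σ ++ [v]) w < s) ↔
      IsSafe G s σ.toFinset v ∧ ∀ w ∈ σ, backDeg G σ w < s := by
  have hold : ∀ w ∈ σ, backDeg G (σ ++ [v]) w = backDeg G σ w := fun w hw ↦
    backDeg_concat_of_ne G σ (ne_of_mem_of_not_mem hw hv)
  simp +contextual only [List.forall_mem_append, List.forall_mem_singleton, hold,
    backDeg_concat_self G hv, IsSafe, and_comm]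

theorem gameVal_le_iff_aliceWins {alice : Bool} :
    gameVal G alice σ ≤ s ↔
      AliceWins G s alice σ.toFinset ∧ ∀ w ∈ σ, backDeg G σ w < s := by
  induction hC : σ.toFinset using WellFoundedGT.induction generalizing σ alice with
  | _ C ih =>
  subst hC
  by_cases hfull : ∀ v, v ∈ σ
  · have huniv : σ.toFinset = Finset.univ := by simpa [Finset.eq_univ_iff_forall] using hfull
    simp [gameVal_of_forall_mem hfull, colOrd_le_iff, huniv, AliceWins.univ, hfull]
  have hfree : ∃ v, v ∉ σ := not_forall.1 hfull
  have hC : σ.toFinset ≠ Finset.univ := by simpa [Finset.eq_univ_iff_forall] using hfree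
  have hnext (alice : Bool) {v : V} (hv : v ∉ σ) : gameVal G alice (σ ++ [v]) ≤ s ↔
      (IsSafe G s σ.toFinset v ∧ AliceWins G s alice (insert v σ.toFinset)) ∧
        ∀ w ∈ σ, backDeg G σ w < s := by
    have hinsert : (σ ++ [v]).toFinset = insert v σ.toFinset := by simp
    rw [ih _ (Finset.ssubset_insert (by simpa using hv)) hinsert,
      forall_backDeg_concat_lt_iff hv]
    tauto
  cases alice with
  | true =>
    rw [gameVal_true_le_iff hfree, AliceWins.true_iff_exists hC]
    simp only [List.mem_toFinset]
    grind
  | false =>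
    rw [gameVal_false_le_iff hfree, AliceWins.false_iff_forall]
    simp only [List.mem_toFinset]
    grind

end Threshold

theorem sigmaGcol_le_sigmaGcolB_general {V : Type*} [Fintype V] (G : SimpleGraph V)
    (σ : List V) : sigmaGcolA G σ ≤ sigmaGcolB G σ := by
  obtain ⟨hwin, hpast⟩ := gameVal_le_iff_aliceWins.1 (le_refl (gameVal G false σ))
  exact gameVal_le_iff_aliceWins.2 ⟨hwin.true_of_false, hpast⟩

/-- If `σ` is a preordering of `G` of even length, then
`σ-gcol(G) ≤ σ-gcol_B(G)`: Alice cannot obtain a smaller score in the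
`σ`-game by letting Bob move first (i.e. by skipping her first turn). -/
theorem sigmaGcol_le_sigmaGcolB {V : Type*} [Fintype V] (G : SimpleGraph V)
    (σ : List V) (hnodup : σ.Nodup) (heven : Even σ.length) :
    sigmaGcol G σ ≤ sigmaGcolB G σ := by
  rw [sigmaGcol, if_pos heven]
  exact sigmaGcol_le_sigmaGcolB_general G σ
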